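/- Let f be a homeomorphism of the open annulus 𝔸 isotopic to the identity and satisfying the intersection property, and let F be a lift of f to ℝ². Then for every p ∈ ℤ and q ∈ ℤ, Rot_weak(F^q ∘ T^p) = q·Rot_weak(F) + p (with the convention that multiplication by q and translation by p act on [−∞,+∞] in the obvious way). -/

import Mathlib

open Filter Topology Set

noncomputable section

/-- The plane ℝ². -/
abbrev Plane := ℝ × ℝ

/-- The open annulus 𝔸 = ℝ/ℤ × ℝ. -/
abbrev Ann := AddCircle (1 : ℝ) × ℝ

/-- The covering map π : ℝ² → 𝔸, (x,y) ↦ (x + ℤ, y). -/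
def prj : Plane → Ann := fun p => ((p.1 : AddCircle (1 : ℝ)), p.2)

/-- The deck transformation T^k : ℝ² → ℝ², (x,y) ↦ (x + k, y). -/
def Tr (k : ℤ) : Plane → Plane := fun p => (p.1 + (k : ℝ), p.2)

/-- `F` is a lift of `f` to the universal cover ℝ² of the annulus. -/
def IsLift (f : Ann ≃ₜ Ann) (F : Plane ≃ₜ Plane) : Prop :=
  ∀ p : Plane, prj (F p) = f (prj p)

/-- `f` is isotopic to the identity: there is a continuous family of homeomorphisms
joining the identity to `f`. -/
def IsotopicToId (f : Ann ≃ₜ Ann) : Prop :=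
  ∃ H : ℝ → Ann → Ann,
    Continuous (fun q : ℝ × Ann => H q.1 q.2) ∧
    (∀ t : ℝ, ∃ h : Ann ≃ₜ Ann, ∀ z, H t z = h z) ∧
    (∀ z, H 0 z = z) ∧ (∀ z, H 1 z = f z)

/-- An essential circle in 𝔸: a simple closed curve which is not null-homotopic. -/
def IsEssentialCircle (c : Set Ann) : Prop :=
  ∃ φ : C(AddCircle (1 : ℝ), Ann), Function.Injective φ ∧ Set.range φ = c ∧
    ¬ ∃ pt : Ann, φ.Homotopic (ContinuousMap.const _ pt)

/-- `f` has the intersection property: every essential circle meets its image. -/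
def IntersectionProperty (f : Ann → Ann) : Prop :=
  ∀ c : Set Ann, IsEssentialCircle c → (c ∩ f '' c).Nonempty

/-- `z` is a positively recurrent point of `g`: some subsequence of the forward orbit
of `z` converges to `z`. -/
def PosRec {X : Type*} [TopologicalSpace X] (g : X → X) (z : X) : Prop :=
  ∃ φ : ℕ → ℕ, StrictMono φ ∧ Tendsto (fun k => g^[φ k] z) atTop (𝓝 z)

/-- The positively recurrent point `z` has rotation number `ρ` for the lift `F` of `f`. -/
def HasRotNum (f : Ann → Ann) (F : Plane → Plane) (z : Ann) (ρ : ℝ) : Prop :=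
  PosRec f z ∧
    ∀ zt : Plane, prj zt = z →
      ∀ φ : ℕ → ℕ, StrictMono φ →
        Tendsto (fun k => f^[φ k] z) atTop (𝓝 z) →
        Tendsto (fun k => ((F^[φ k] zt).1 - zt.1) / (φ k : ℝ)) atTop (𝓝 ρ)

/-- The rotation set Rot(F): the set of rotation numbers of positively recurrent
points of `f`. -/
def Rot (f : Ann → Ann) (F : Plane → Plane) : Set ℝ := {ρ | ∃ z, HasRotNum f F z ρ}

/-- The region `L(Γ)` of the plane on the left (west) of a line `Γ` (as a subset of ℝ²):
points lying in the connected component of the complement of `Γ` containing all far-west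
points of the horizontal axis. -/
def Lset (Γ : Set Plane) : Set Plane :=
  {p | ∃ s : ℝ, ∀ x ≤ s, p ∈ connectedComponentIn Γᶜ ((x, 0) : Plane)}

/-- The region `R(Γ)` of the plane on the right (east) of a line `Γ`. -/
def Rset (Γ : Set Plane) : Set Plane :=
  {p | ∃ s : ℝ, ∀ x ≥ s, p ∈ connectedComponentIn Γᶜ ((x, 0) : Plane)}

/-- The relation `Γ₁ < Γ₂` on (essential, oriented from south to north) lines:
`Cl(L(Γ₁)) ⊆ L(Γ₂)`. -/
def lineLT (Γ₁ Γ₂ : Set Plane) : Prop := closure (Lset Γ₁) ⊆ Lset Γ₂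

/-- An essential line in ℝ², oriented from south to north: a properly embedded copy of ℝ
whose second coordinate tends to ±∞ at ±∞. -/
def IsEssLinePlane (Γ : ℝ → Plane) : Prop :=
  Continuous Γ ∧ Function.Injective Γ ∧ IsProperMap Γ ∧
    Tendsto (fun t => (Γ t).2) atTop atTop ∧ Tendsto (fun t => (Γ t).2) atBot atBot

/-- An essential line in the annulus 𝔸: a properly embedded simple path joining one end
to the other. -/
def IsEssLineAnn (γ : ℝ → Ann) : Prop :=
  Continuous γ ∧ Function.Injective γ ∧ IsProperMap γ ∧
    ((Tendsto (fun t => (γ t).2) atTop atTop ∧ Tendsto (fun t => (γ t).2) atBot atBot) ∨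
     (Tendsto (fun t => (γ t).2) atTop atBot ∧ Tendsto (fun t => (γ t).2) atBot atTop))

/-- An oriented essential line in 𝔸 joining the lower end S to the upper end N. -/
def IsEssLineAnnSN (γ : ℝ → Ann) : Prop :=
  Continuous γ ∧ Function.Injective γ ∧ IsProperMap γ ∧
    Tendsto (fun t => (γ t).2) atTop atTop ∧ Tendsto (fun t => (γ t).2) atBot atBot

/-- The weak rotation set of `F` relative to a compact set `K` of the annulus,
as a subset of [-∞,+∞]. -/
def RotWeakK (F : Plane → Plane) (K : Set Ann) : Set EReal :=
  {r | ∃ zs : ℕ → Plane, ∃ ns : ℕ → ℕ,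
      (∀ k, prj (zs k) ∈ K) ∧ (∀ k, prj (F^[ns k] (zs k)) ∈ K) ∧
      (∀ k, 0 < ns k) ∧ Tendsto ns atTop atTop ∧
      Tendsto (fun k => ((((F^[ns k] (zs k)).1 - (zs k).1) / (ns k : ℝ) : ℝ) : EReal))
        atTop (𝓝 r)}

/-- The weak rotation set of `F`: union of the `RotWeakK F K` over all compact `K ⊆ 𝔸`. -/
def RotWeak (F : Plane → Plane) : Set EReal :=
  ⋃ K ∈ {K : Set Ann | IsCompact K}, RotWeakK F K

/-- The integer power `F^k` of a homeomorphism of the plane, as a map. -/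
def hpow (F : Plane ≃ₜ Plane) : ℤ → Plane → Plane
  | Int.ofNat n => (⇑F)^[n]
  | Int.negSucc n => (⇑F.symm)^[n + 1]

/-!
For `q ≠ 0` the formula only uses that `F` commutes with the deck transformations: rounding return
times up to multiples of `|q|` changes displacements by a bounded amount. For `q = 0` it says that
`Rot_weak(F)` is nonempty, which follows once some point of the circle `y = 0` returns to that
circle after `n` steps, for every `n > 0`. Otherwise `f ^ n` or its inverse would push the half
annulus `y ≤ 0` into its interior, and `f` or its inverse would have a trapping region `W`
separating the two ends. A continuous `u` which is `0` on the image of `W` and `1` off the interior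
of `W` then gives an essential circle in `{0 < u < 1}`, which is disjoint from its image.

This circle is a polygon on a fine lattice along the boundary of `{u < 1/2}`. If no component of the
lattice boundary met its own translates, its components could be labelled equivariantly by integers,
and the resulting closed cochain would have different periods near the two ends; a shortest
lattice path from a boundary point to one of its translates closes up to a simple curve.
-/

section Covering

theorem continuous_prj : Continuous prj :=
  ((AddCircle.continuous_mk' (1 : ℝ)).comp continuous_fst).prodMk continuous_snd

theorem surjective_prj : Function.Surjective prj := by
  rintro ⟨x, y⟩
  obtain ⟨t, rfl⟩ := QuotientAddGroup.mk_surjective x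
  exact ⟨(t, y), rfl⟩

theorem coe_addCircle_eq_iff {x y : ℝ} : (x : AddCircle (1 : ℝ)) = y ↔ ∃ k : ℤ, x = y + k := by
  rw [← sub_eq_zero, ← AddCircle.coe_sub, AddCircle.coe_eq_zero_iff]
  exact exists_congr fun k => by rw [zsmul_one, eq_comm, sub_eq_iff_eq_add']

theorem prj_eq_prj_iff {z w : Plane} : prj z = prj w ↔ ∃ k : ℤ, z = Tr k w := by
  simp only [prj, Tr, Prod.ext_iff, coe_addCircle_eq_iff, exists_and_right]

theorem prj_Tr (k : ℤ) (z : Plane) : prj (Tr k z) = prj z :=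
  prj_eq_prj_iff.2 ⟨k, rfl⟩

theorem Tr_zero : Tr 0 = id := by
  ext z <;> simp [Tr]

theorem Tr_add (k l : ℤ) : Tr (k + l) = Tr k ∘ Tr l := by
  ext z
  · simp only [Tr, Function.comp_apply]
    push_cast
    ring
  · rfl

theorem iterate_Tr (k : ℤ) (n : ℕ) : (Tr k)^[n] = Tr (n * k) := by
  induction n with
  | zero => simp [Tr_zero]
  | succ n ih => rw [Function.iterate_succ, ih, ← Tr_add, Nat.cast_succ, add_one_mul]

theorem leftInverse_Tr (k : ℤ) : Function.LeftInverse (Tr (-k)) (Tr k) := fun z => by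
  rw [← Function.comp_apply (f := Tr (-k)), ← Tr_add, neg_add_cancel, Tr_zero, id]

theorem commute_Tr {G : Plane → Plane} (hG : Function.Commute G (Tr 1)) (k : ℤ) :
    Function.Commute G (Tr k) := by
  have hneg : Function.Commute G (Tr (-1)) :=
    hG.inverses_right (neg_neg (1 : ℤ) ▸ leftInverse_Tr (-1)) (leftInverse_Tr 1)
  obtain ⟨n, rfl | rfl⟩ := k.eq_nat_or_neg
  · simpa [iterate_Tr] using hG.iterate_right n
  · simpa [iterate_Tr] using hneg.iterate_right n

end Covering

section Degree

theorem sub_eq_sub_of_coe_eq {A : Type*} [TopologicalSpace A] [PreconnectedSpace A] {g h : A → ℝ}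
    (hg : Continuous g) (hh : Continuous h) (hgh : ∀ a, (g a : AddCircle (1 : ℝ)) = h a)
    (a b : A) : g a - h a = g b - h b :=
  (AddCircle.isCoveringMap_coe (1 : ℝ)).const_of_comp (hg.sub hh)
    (fun a b => by simp [hgh]) a b

theorem lift_sub_eq_of_homotopic {φ ψ : C(AddCircle (1 : ℝ), AddCircle (1 : ℝ))}
    (hφψ : φ.Homotopic ψ) {γ δ : ℝ → ℝ} (hγ : Continuous γ) (hδ : Continuous δ)
    (hγφ : ∀ t : ℝ, (γ t : AddCircle (1 : ℝ)) = φ t)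
    (hδψ : ∀ t : ℝ, (δ t : AddCircle (1 : ℝ)) = ψ t) :
    γ 1 - γ 0 = δ 1 - δ 0 := by
  obtain ⟨H⟩ := hφψ
  have cov := AddCircle.isCoveringMap_coe (1 : ℝ)
  let H' : C(unitInterval × ℝ, AddCircle (1 : ℝ)) :=
    ⟨fun q => H (q.1, q.2), by have := AddCircle.continuous_mk' (1 : ℝ); fun_prop⟩
  have hH'₀ (t : ℝ) : H' (0, t) = (γ t : AddCircle (1 : ℝ)) := by simp [H', hγφ]
  let L := cov.liftHomotopy H' ⟨γ, hγ⟩ hH'₀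
  have hL (q : unitInterval × ℝ) : (L q : AddCircle (1 : ℝ)) = H' q :=
    congrFun (cov.liftHomotopy_lifts H' ⟨γ, hγ⟩ hH'₀) q
  have hL₀ (t : ℝ) : L (0, t) = γ t := cov.liftHomotopy_zero H' ⟨γ, hγ⟩ hH'₀ t
  have hperiod : ((1 : ℝ) : AddCircle (1 : ℝ)) = (0 : ℝ) := by simp
  have hincr := sub_eq_sub_of_coe_eq (g := fun s : unitInterval => L (s, 1))
    (h := fun s => L (s, 0)) (by fun_prop) (by fun_prop) (fun s => by simp [hL, H', hperiod]) 0 1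
  have hend := sub_eq_sub_of_coe_eq (g := fun t => L (1, t)) (h := δ) (by fun_prop) hδ
    (fun t => by simp [hL, H', hδψ]) 0 1
  simp only [hL₀] at hincr
  linarith

theorem IsotopicToId.homotopic {f : Ann ≃ₜ Ann} (hf : IsotopicToId f) :
    (ContinuousMap.id Ann).Homotopic f := by
  obtain ⟨H, hH, -, hH₀, hH₁⟩ := hf
  exact ⟨⟨⟨fun q => H q.1 q.2, hH.comp (by fun_prop : Continuous fun q : unitInterval × Ann =>
    ((q.1 : ℝ), q.2))⟩, by simp [hH₀], by simp [hH₁]⟩⟩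

theorem IsLift.commute_Tr {f : Ann ≃ₜ Ann} {F : Plane ≃ₜ Plane} (hF : IsLift f F)
    (hf : (ContinuousMap.id Ann).Homotopic f) : Function.Commute F (Tr 1) := by
  let ι : C(AddCircle (1 : ℝ), Ann) := ⟨fun x => (x, 0), by fun_prop⟩
  let pr : C(Ann, AddCircle (1 : ℝ)) := ⟨Prod.fst, continuous_fst⟩
  have hTr : Continuous (Tr 1) := by unfold Tr; fun_prop
  have hcoe (z : Plane) : prj (F (Tr 1 z)) = prj (F z) := by rw [hF, hF, prj_Tr]
  have hdeg : (1 : ℝ) - 0 = (F (1, 0)).1 - (F (0, 0)).1 := lift_sub_eq_of_homotopic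
    (((ContinuousMap.Homotopic.refl pr).comp hf).comp (.refl ι))
    (γ := id) (δ := fun t => (F (t, 0)).1) continuous_id (by fun_prop) (fun _ => rfl)
    (fun t => congrArg Prod.fst (hF (t, 0)))
  have hconst (z : Plane) := sub_eq_sub_of_coe_eq (g := fun z => (F (Tr 1 z)).1)
    (h := fun z => (F z).1) (by fun_prop) (by fun_prop) (fun z => congrArg Prod.fst (hcoe z)) z
    (0, 0)
  have hTr₀ : Tr 1 (0, 0) = (1, 0) := by simp [Tr]
  intro z
  ext
  · have := hconst z
    rw [hTr₀] at this
    change _ = (F z).1 + ((1 : ℤ) : ℝ)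
    rw [Int.cast_one]
    linarith
  · exact (congrArg Prod.snd (hcoe z) :)

/-- A curve in the plane that a deck transformation `Tr k`, `k ≠ 0`, shifts along itself covers a
closed curve of degree `k`. -/
theorem isEssentialCircle_range {γ : ℝ → Plane} {k : ℤ} (hγ : Continuous γ) (hk : k ≠ 0)
    (hγk : ∀ t, γ (t + 1) = Tr k (γ t))
    (hinj : ∀ s t, prj (γ s) = prj (γ t) → (s : AddCircle (1 : ℝ)) = t) :
    IsEssentialCircle (range (prj ∘ γ)) := by
  have hper : Function.Periodic (prj ∘ γ) 1 := fun t => by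
    rw [Function.comp_apply, hγk, prj_Tr, Function.comp_apply]
  let φ : C(AddCircle (1 : ℝ), Ann) :=
    ⟨hper.lift, continuous_quot_lift _ (continuous_prj.comp hγ)⟩
  have hφ (t : ℝ) : φ t = prj (γ t) := hper.lift_coe t
  refine ⟨φ, fun x y hxy => ?_, ?_, ?_⟩
  · obtain ⟨s, rfl⟩ := QuotientAddGroup.mk_surjective x
    obtain ⟨t, rfl⟩ := QuotientAddGroup.mk_surjective y
    exact hinj s t (by rw [← hφ, ← hφ]; exact hxy)
  · exact (QuotientAddGroup.mk_surjective.range_comp φ).symm.trans (congrArg range (funext hφ))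
  · rintro ⟨pt, hpt⟩
    obtain ⟨w, rfl⟩ := surjective_prj pt
    let pr : C(Ann, AddCircle (1 : ℝ)) := ⟨Prod.fst, continuous_fst⟩
    have hdeg := lift_sub_eq_of_homotopic ((ContinuousMap.Homotopic.refl pr).comp hpt)
      (γ := fun t => (γ t).1) (δ := fun _ => w.1) (by fun_prop) continuous_const
      (fun t => congrArg Prod.fst (hφ t).symm) (fun _ => rfl)
    have hstep := congrArg Prod.fst (hγk 0)
    simp only [Tr, zero_add] at hstep
    refine hk (Int.cast_injective (α := ℝ) ?_)
    rw [Int.cast_zero]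
    linarith

theorem isEssentialCircle_horizontal (y : ℝ) : IsEssentialCircle {z | z.2 = y} := by
  have hrange : range (prj ∘ fun t : ℝ => (t, y)) = {z | z.2 = y} := by
    refine Subset.antisymm (range_subset_iff.2 fun _ => rfl) fun z hz => ?_
    obtain ⟨w, rfl⟩ := surjective_prj z
    exact ⟨w.1, congrArg prj (Prod.ext rfl (Eq.symm hz))⟩
  rw [← hrange]
  exact isEssentialCircle_range (k := 1) (by fun_prop) one_ne_zero (fun t => by simp [Tr])
    fun s t h => congrArg Prod.fst h

end Degree

section FreeActions

theorem exists_equivariant_int {X : Type*} {σ : Equiv.Perm X}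
    (hσ : ∀ (x : X) (k : ℤ), (σ ^ k) x = x → k = 0) :
    ∃ κ : X → ℤ, ∀ x, κ (σ x) = κ x + 1 := by
  let orbit (x : X) : Quotient (Equiv.Perm.SameCycle.setoid σ) := Quotient.mk _ x
  have horbit (x : X) : orbit (σ x) = orbit x :=
    Quotient.sound (Equiv.Perm.sameCycle_apply_left.2 (.refl σ x))
  have hrep (x : X) : σ.SameCycle (orbit x).out x :=
    Quotient.mk_out (s := Equiv.Perm.SameCycle.setoid σ) x
  choose κ hκ using hrep
  refine ⟨κ, fun x => ?_⟩
  have hσx : (σ ^ (κ (σ x))) (orbit x).out = (σ ^ (κ x + 1)) (orbit x).out := by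
    rw [← horbit, hκ, horbit, add_comm, zpow_add, zpow_one, Equiv.Perm.mul_apply, hκ]
  have := hσ (orbit x).out (-(κ x + 1) + κ (σ x)) (by
    rw [zpow_add, Equiv.Perm.mul_apply, hσx, ← Equiv.Perm.mul_apply, ← zpow_add,
      neg_add_cancel, zpow_zero, Equiv.Perm.one_apply])
  lia

variable {V : Type*} {G : SimpleGraph V} {σ : G ≃g G}

theorem exists_equivariant_int_of_not_reachable
    (hσ : ∀ (a : V) (k : ℤ), G.Reachable a ((σ ^ k) a) → k = 0) :
    ∃ κ : V → ℤ, (∀ a, κ (σ a) = κ a + 1) ∧ ∀ a b, G.Adj a b → κ a = κ b := by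
  let τ : Equiv.Perm G.ConnectedComponent := σ.connectedComponentEquiv
  have hτ (k : ℤ) (a : V) :
      (τ ^ k) (G.connectedComponentMk a) = G.connectedComponentMk ((σ ^ k) a) := by
    induction k generalizing a with
    | zero => rfl
    | succ n ih => rw [zpow_add_one, zpow_add_one]; exact ih (σ a)
    | pred n ih => rw [zpow_sub_one, zpow_sub_one]; exact ih (σ⁻¹ a)
  obtain ⟨κ, hκ⟩ := exists_equivariant_int (σ := τ) fun c k hc => by
    obtain ⟨a, rfl⟩ := c.exists_rep
    exact hσ a k (SimpleGraph.ConnectedComponent.exact ((hτ k a).symm.trans hc).symm)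
  exact ⟨fun a => κ (G.connectedComponentMk a), fun a => hκ (G.connectedComponentMk a),
    fun a b hab => congrArg κ (SimpleGraph.ConnectedComponent.sound hab.reachable)⟩

theorem exists_walk_getVert {a b : V} (w : G.Walk a b) {i j : ℕ} (hij : i ≤ j)
    (hj : j ≤ w.length) :
    ∃ q : G.Walk (w.getVert i) (w.getVert j), q.length = j - i := by
  obtain ⟨d, rfl⟩ := Nat.exists_eq_add_of_le hij
  refine ⟨((w.drop i).take d).copy rfl (by rw [SimpleGraph.Walk.drop_getVert]), ?_⟩
  rw [SimpleGraph.Walk.length_copy, SimpleGraph.Walk.take_length, SimpleGraph.Walk.drop_length]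
  lia

theorem exists_shortest_walk_to_translate (hσ : ∀ (a : V) (k : ℤ), (σ ^ k) a = a → k = 0)
    (h : ∃ a, ∃ k : ℤ, k ≠ 0 ∧ G.Reachable a ((σ ^ k) a)) :
    ∃ a, ∃ k : ℤ, k ≠ 0 ∧ ∃ w : G.Walk a ((σ ^ k) a), 0 < w.length ∧
      ∀ i j, i < j → j < w.length → ∀ l : ℤ, w.getVert j ≠ (σ ^ l) (w.getVert i) := by
  obtain ⟨a₀, k₀, h₀⟩ := h
  obtain ⟨⟨a, k⟩, ⟨hk, hreach⟩, hmin⟩ := exists_minimalFor_of_wellFoundedLT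
    (fun x : V × ℤ => x.2 ≠ 0 ∧ G.Reachable x.1 ((σ ^ x.2) x.1))
    (fun x => G.dist x.1 ((σ ^ x.2) x.1)) ⟨(a₀, k₀), h₀⟩
  obtain ⟨w, hw⟩ := hreach.exists_walk_length_eq_dist
  refine ⟨a, k, hk, w, Nat.pos_of_ne_zero fun hzero => ?_, fun i j hij hj l hl => ?_⟩
  · exact hk (hσ a k (SimpleGraph.Walk.eq_of_length_eq_zero hzero).symm)
  obtain ⟨q, hq⟩ := exists_walk_getVert w hij.le hj.le
  rcases eq_or_ne l 0 with rfl | hl₀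
  · have := (w.isPath_of_length_eq_dist hw).getVert_injOn hj.le (hij.le.trans hj.le) hl
    lia
  · have hle : w.length ≤ j - i := by
      rw [← hq, hw]
      have hdist : G.dist (w.getVert i) ((σ ^ l) (w.getVert i)) ≤ q.length :=
        hl ▸ SimpleGraph.dist_le q
      have hreach' : G.Reachable (w.getVert i) ((σ ^ l) (w.getVert i)) := hl ▸ q.reachable
      have hshortest : G.dist a ((σ ^ k) a) ≤ G.dist (w.getVert i) ((σ ^ l) (w.getVert i)) :=
        le_of_not_gt fun hlt => (hmin (j := (_, l)) ⟨hl₀, hreach'⟩ hlt.le).not_gt hlt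
      exact hshortest.trans hdist
    lia

theorem eq_zpow_apply_comm {l : ℤ} {x y : V} : x = (σ ^ l) y ↔ y = (σ ^ (-l)) x := by
  rw [zpow_neg]
  exact eq_comm.trans (σ ^ l).toEquiv.eq_symm_apply.symm

theorem ediv_emod_add_one_cases {L : ℤ} (hL : 0 < L) (i : ℤ) :
    ((i + 1) / L = i / L ∧ (i + 1) % L = i % L + 1) ∨
      ((i + 1) / L = i / L + 1 ∧ (i + 1) % L = 0 ∧ i % L + 1 = L) := by
  have hi := Int.emod_add_mul_ediv i L
  have hnonneg := Int.emod_nonneg i hL.ne'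
  rcases (Int.add_one_le_of_lt (Int.emod_lt_of_pos i hL)).lt_or_eq with hlt | heq
  · exact .inl ((Int.ediv_emod_unique hL).2 ⟨by lia, by lia, hlt⟩)
  · obtain ⟨hdiv, hrem⟩ := (Int.ediv_emod_unique (a := i + 1) (q := i / L + 1) (r := 0) hL).2
      ⟨by lia, le_rfl, hL⟩
    exact .inr ⟨hdiv, hrem, heq⟩

theorem exists_periodic_walk (hσ : ∀ (a : V) (k : ℤ), (σ ^ k) a = a → k = 0)
    (h : ∃ a, ∃ k : ℤ, k ≠ 0 ∧ G.Reachable a ((σ ^ k) a)) :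
    ∃ (v : ℤ → V) (L k : ℤ), 0 < L ∧ k ≠ 0 ∧ (∀ i, G.Adj (v i) (v (i + 1))) ∧
      (∀ i, v (i + L) = (σ ^ k) (v i)) ∧ ∀ i j l : ℤ, v i = (σ ^ l) (v j) → L ∣ i - j := by
  obtain ⟨a, k, hk, w, hL, hw⟩ := exists_shortest_walk_to_translate hσ h
  set L : ℤ := (w.length : ℤ)
  have hL' : 0 < L := Int.natCast_pos.2 hL
  have hmod (i : ℤ) : 0 ≤ i % L ∧ i % L < L :=
    ⟨Int.emod_nonneg i hL'.ne', Int.emod_lt_of_pos i hL'⟩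
  let p (i : ℤ) : V := w.getVert (i % L).toNat
  have hp (i j l : ℤ) (hij : p i = (σ ^ l) (p j)) : j % L ≤ i % L := by
    by_contra! hlt
    have := hmod i
    have := hmod j
    exact hw (i % L).toNat (j % L).toNat (by lia) (by lia) (-l) (eq_zpow_apply_comm.1 hij)
  have hstep (i : ℤ) : G.Adj (p i) ((σ ^ (k * ((i + 1) / L - i / L))) (p (i + 1))) := by
    have hadj := w.adj_getVert_succ (i := (i % L).toNat) (by have := hmod i; lia)
    rcases ediv_emod_add_one_cases hL' i with ⟨hdiv, hrem⟩ | ⟨hdiv, hrem, heq⟩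
    · simp only [p, hdiv, hrem, sub_self, mul_zero, zpow_zero, RelIso.one_apply]
      rwa [Int.toNat_add (hmod i).1 zero_le_one]
    · have hlast : (i % L).toNat + 1 = w.length := by have := hmod i; lia
      rw [hlast, SimpleGraph.Walk.getVert_length] at hadj
      simpa only [p, hdiv, hrem, add_sub_cancel_left, mul_one, Int.toNat_zero,
        SimpleGraph.Walk.getVert_zero] using hadj
  refine ⟨fun i => (σ ^ (k * (i / L))) (p i), L, k, hL', hk, fun i => ?_, fun i => ?_,
    fun i j l hij => ?_⟩
  · have := (σ ^ (k * (i / L))).map_adj_iff.2 (hstep i)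
    rwa [← RelIso.mul_apply, ← zpow_add, ← mul_add, add_sub_cancel] at this
  · simp only [p, Int.add_emod_right, Int.add_ediv_of_dvd_right (dvd_refl L),
      Int.ediv_self hL'.ne', ← RelIso.mul_apply, ← zpow_add]
    rw [mul_add_one, add_comm]
  · have hij' : p i = (σ ^ (-(k * (i / L)) + (l + k * (j / L)))) (p j) := by
      rw [zpow_add, RelIso.mul_apply, zpow_add, RelIso.mul_apply, ← hij]
      exact eq_zpow_apply_comm.1 rfl
    exact Int.ModEq.dvd ((hp _ _ _ hij').antisymm (hp _ _ _ (eq_zpow_apply_comm.1 hij')))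

end FreeActions

section Grid

/-- The subgraph of the square lattice induced on `P`, with the points outside `P` kept as isolated
vertices so that translations of `ℤ × ℤ` act on it. -/
def gridGraph (P : Set (ℤ × ℤ)) : SimpleGraph (ℤ × ℤ) where
  Adj a b := a ∈ P ∧ b ∈ P ∧ |a.1 - b.1| + |a.2 - b.2| = 1
  symm := ⟨fun a b h => ⟨h.2.1, h.1, by rw [abs_sub_comm, abs_sub_comm b.2]; exact h.2.2⟩⟩
  loopless := ⟨fun a h => by simp at h⟩

/-- The horizontal translation by `m`, as an automorphism of the lattice graph of a set it
preserves. -/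
def gridShift {P : Set (ℤ × ℤ)} (m : ℤ) (hP : ∀ a, a + (m, 0) ∈ P ↔ a ∈ P) :
    gridGraph P ≃g gridGraph P where
  toEquiv := Equiv.addRight (m, 0)
  map_rel_iff' := by simp [gridGraph, hP]

theorem gridShift_zpow_apply {P : Set (ℤ × ℤ)} {m : ℤ} (hP : ∀ a, a + (m, 0) ∈ P ↔ a ∈ P) (k : ℤ)
    (a : ℤ × ℤ) : (gridShift m hP ^ k) a = a + (k * m, 0) := by
  have hinv (a : ℤ × ℤ) : (gridShift m hP)⁻¹ a = a - (m, 0) := rfl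
  induction k generalizing a with
  | zero => simp
  | succ n ih =>
    rw [zpow_add_one, RelIso.mul_apply, ih]
    change a + (m, 0) + _ = _
    ext <;> simp [add_mul, add_assoc, add_comm]
  | pred n ih =>
    rw [zpow_sub_one, RelIso.mul_apply, ih, hinv]
    ext
    · simp only [Prod.fst_add, Prod.fst_sub]
      ring
    · simp

/-- The points outside `A` that share a lattice square with a point of `A`. -/
def outerBoundary (A : Set (ℤ × ℤ)) : Set (ℤ × ℤ) :=
  {a | a ∉ A ∧ ∃ b ∈ A, |a.1 - b.1| ≤ 1 ∧ |a.2 - b.2| ≤ 1}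

theorem add_mem_outerBoundary_iff {A : Set (ℤ × ℤ)} {c : ℤ × ℤ} (hA : ∀ a, a + c ∈ A ↔ a ∈ A)
    (a : ℤ × ℤ) : a + c ∈ outerBoundary A ↔ a ∈ outerBoundary A := by
  refine and_congr (not_congr (hA a)) ((Equiv.addRight c).exists_congr_right.symm.trans ?_)
  simp [hA]

theorem sum_range_eq_of_closed {R : Type*} [AddCommGroup R] {h v : ℤ → ℤ → R} {m : ℕ}
    (hclosed : ∀ i j, h i j + v (i + 1) j = v i j + h i (j + 1))
    (hv : ∀ j, v m j = v 0 j) (j j' : ℤ) :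
    ∑ i ∈ Finset.range m, h i j = ∑ i ∈ Finset.range m, h i j' := by
  have hstep (j : ℤ) : ∑ i ∈ Finset.range m, h i j = ∑ i ∈ Finset.range m, h i (j + 1) := by
    rw [← sub_eq_zero, ← Finset.sum_sub_distrib, ← neg_eq_zero, ← Finset.sum_neg_distrib]
    calc ∑ i ∈ Finset.range m, -(h i j - h i (j + 1))
        = ∑ i ∈ Finset.range m, (v (i + 1 : ℕ) j - v i j) := by
          refine Finset.sum_congr rfl fun i _ => ?_
          rw [neg_sub, sub_eq_sub_iff_add_eq_add, add_comm, ← hclosed, add_comm]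
          push_cast
          rfl
      _ = v m j - v (0 : ℕ) j := Finset.sum_range_sub (fun i : ℕ => v i j) m
      _ = 0 := by rw [hv, Nat.cast_zero, sub_self]
  have hper : Function.Periodic (fun j => ∑ i ∈ Finset.range m, h i j) 1 := fun j => (hstep j).symm
  have hzero (j : ℤ) := hper.int_mul_eq j
  simp only [Int.cast_id, mul_one] at hzero
  exact (hzero j).trans (hzero j').symm

/-- The coboundary of `g` on the lattice edges with an end in `A`, extended by `0`. -/
def truncatedCoboundary (A : Set (ℤ × ℤ)) (g : ℤ × ℤ → ℤ) (a b : ℤ × ℤ) : ℤ :=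
  open scoped Classical in if a ∈ A ∨ b ∈ A then g b - g a else 0

theorem truncatedCoboundary_closed {A : Set (ℤ × ℤ)} {g : ℤ × ℤ → ℤ}
    (hg : ∀ a b, (gridGraph (outerBoundary A)).Adj a b → g a = g b) (i j : ℤ) :
    truncatedCoboundary A g (i, j) (i + 1, j) +
        truncatedCoboundary A g (i + 1, j) (i + 1, j + 1) =
      truncatedCoboundary A g (i, j) (i, j + 1) +
        truncatedCoboundary A g (i, j + 1) (i + 1, j + 1) := by
  by_cases h : ∃ c ∈ A, (i ≤ c.1 ∧ c.1 ≤ i + 1) ∧ j ≤ c.2 ∧ c.2 ≤ j + 1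
  · obtain ⟨c, hc, hcorner⟩ := h
    have hedge {x y x' y' : ℤ} (hx : i ≤ x ∧ x ≤ i + 1 := by lia) (hy : j ≤ y ∧ y ≤ j + 1 := by lia)
        (hx' : i ≤ x' ∧ x' ≤ i + 1 := by lia) (hy' : j ≤ y' ∧ y' ≤ j + 1 := by lia)
        (hadj : |x - x'| + |y - y'| = 1 := by simp) :
        truncatedCoboundary A g (x, y) (x', y') = g (x', y') - g (x, y) := by
      by_cases hab : (x, y) ∈ A ∨ (x', y') ∈ A
      · exact if_pos hab
      · obtain ⟨ha, hb⟩ := not_or.1 hab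
        refine (if_neg hab).trans (sub_eq_zero.2 (hg _ _ ⟨⟨ha, c, hc, ?_⟩, ⟨hb, c, hc, ?_⟩,
          hadj⟩).symm).symm <;> simp only [abs_le] <;> lia
    rw [hedge, hedge, hedge, hedge]
    ring
  · have hout {x y : ℤ} (hx : i ≤ x ∧ x ≤ i + 1 := by lia) (hy : j ≤ y ∧ y ≤ j + 1 := by lia) :
        (x, y) ∉ A := fun hxy => h ⟨_, hxy, hx, hy⟩
    simp [truncatedCoboundary, hout]

/-- If no component of the boundary graph met its own translates, then `⌊a.1 / m⌋` on `A` and an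
equivariant labelling of the boundary components would glue to a function whose truncated
coboundary has period `1` along the row inside `A` and period `0` along the row outside `A`. -/
theorem exists_reachable_outerBoundary_translate {A : Set (ℤ × ℤ)} {m : ℕ} (hm : 0 < m)
    (hA : ∀ a, a + ((m : ℤ), 0) ∈ A ↔ a ∈ A) {j₀ j₁ : ℤ} (hj₀ : ∀ i, (i, j₀) ∈ A)
    (hj₁ : ∀ i, (i, j₁) ∉ A) :
    ∃ a, ∃ k : ℤ, k ≠ 0 ∧ (gridGraph (outerBoundary A)).Reachable a
      ((gridShift m (add_mem_outerBoundary_iff hA) ^ k) a) := by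
  by_contra! hcon
  obtain ⟨κ, hκ, hκadj⟩ := exists_equivariant_int_of_not_reachable
    fun a k h => by_contra fun hk => hcon a k hk h
  classical
  let g (a : ℤ × ℤ) : ℤ := if a ∈ A then a.1 / m else κ a
  have hg (a : ℤ × ℤ) : g (a + ((m : ℤ), 0)) = g a + 1 := by
    have hdiv : (a.1 + m) / (m : ℤ) = a.1 / m + 1 := Int.add_ediv_of_dvd_right dvd_rfl |>.trans
      (by rw [Int.ediv_self (by lia)])
    have hκa : κ (a + ((m : ℤ), 0)) = κ a + 1 := hκ a
    simp only [g, hA, Prod.fst_add, hdiv, hκa]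
    split <;> rfl
  have hgadj (a b : ℤ × ℤ) (hab : (gridGraph (outerBoundary A)).Adj a b) : g a = g b := by
    simpa only [g, if_neg hab.1.1, if_neg hab.2.1.1] using hκadj a b hab
  have hAm (j : ℤ) : ((m : ℤ), j) ∈ A ↔ (0, j) ∈ A := by simpa using hA (0, j)
  have hgm (j : ℤ) : g (m, j) = g (0, j) + 1 := by simpa using hg (0, j)
  have hperiod (j : ℤ) : truncatedCoboundary A g (m, j) (m, j + 1) =
      truncatedCoboundary A g (0, j) (0, j + 1) := by
    simp only [truncatedCoboundary, hAm, hgm, add_sub_add_right_eq_sub]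
  have hsum := sum_range_eq_of_closed (h := fun i j => truncatedCoboundary A g (i, j) (i + 1, j))
    (v := fun i j => truncatedCoboundary A g (i, j) (i, j + 1))
    (truncatedCoboundary_closed hgadj) hperiod j₀ j₁
  have hinside : ∑ i ∈ Finset.range m, truncatedCoboundary A g (i, j₀) (i + 1, j₀) = 1 := by
    have htelescope := Finset.sum_range_sub (fun i : ℕ => g (i, j₀)) m
    simpa [truncatedCoboundary, hj₀, hgm] using htelescope
  have houtside : ∑ i ∈ Finset.range m, truncatedCoboundary A g (i, j₁) (i + 1, j₁) = 0 := by
    simp [truncatedCoboundary, hj₁]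
  lia

end Grid

section Polygons

variable {E : Type*} [AddCommGroup E] [Module ℝ E]

/-- The polygonal line which passes through `v i` at each integer time `i`. -/
def polyline (v : ℤ → E) (t : ℝ) : E :=
  AffineMap.lineMap (v ⌊t⌋) (v (⌊t⌋ + 1)) (Int.fract t)

theorem polyline_eq_lineMap {v : ℤ → E} {n : ℤ} {t : ℝ} (ht : t ∈ Icc (n : ℝ) (n + 1)) :
    polyline v t = AffineMap.lineMap (v n) (v (n + 1)) (t - n) := by
  rcases ht.2.lt_or_eq with hlt | rfl
  · rw [polyline, Int.fract, Int.floor_eq_iff.2 ⟨ht.1, hlt⟩]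
  · simp [polyline]

theorem continuous_polyline [TopologicalSpace E] [IsTopologicalAddGroup E] [ContinuousSMul ℝ E]
    (v : ℤ → E) : Continuous (polyline v) := by
  have hfin : LocallyFinite fun n : ℤ => Icc (n : ℝ) (n + 1) := by
    refine locallyFinite_Icc_of_tendsto ?_ ?_
    · exact tendsto_intCast_atTop_atTop
    · exact tendsto_atBot_add_const_right _ _ (tendsto_intCast_atBot_iff.2 tendsto_id)
  refine hfin.continuous ?_ (fun n => isClosed_Icc) fun n => ?_
  · exact iUnion_eq_univ_iff.2 fun t => ⟨⌊t⌋, Int.floor_le t, (Int.lt_floor_add_one t).le⟩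
  · refine ContinuousOn.congr ?_ fun t ht => polyline_eq_lineMap ht
    fun_prop

theorem polyline_add_intCast (v : ℤ → E) (t : ℝ) (L : ℤ) :
    polyline v (t + L) = polyline (fun i => v (i + L)) t := by
  simp only [polyline, Int.floor_add_intCast, Int.fract_add_intCast, add_right_comm]

theorem polyline_Tr (v : ℤ → Plane) (k : ℤ) (t : ℝ) :
    polyline (Tr k ∘ v) t = Tr k (polyline v t) := by
  simp only [polyline, Tr, Function.comp_apply, AffineMap.lineMap_apply_module, Prod.smul_mk,
    Prod.mk_add_mk, smul_eq_mul, Prod.fst_add, Prod.snd_add, Prod.smul_fst, Prod.smul_snd]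
  ext
  · ring
  · rfl

/-- The point of the lattice `m⁻¹ℤ²` with index `a`. -/
def latticePoint (m : ℕ) (a : ℤ × ℤ) : Plane := (a.1 / m, a.2 / m)

theorem latticePoint_add {m : ℕ} (hm : m ≠ 0) (a : ℤ × ℤ) (k : ℤ) :
    latticePoint m (a + (k * m, 0)) = Tr k (latticePoint m a) := by
  have : (m : ℝ) ≠ 0 := Nat.cast_ne_zero.2 hm
  ext
  · simp only [latticePoint, Tr, Prod.fst_add]
    push_cast
    field_simp
  · simp [latticePoint, Tr]

theorem eq_or_swap_of_lineMap_eq {a b c d : ℤ} {r s : ℝ} (hab : |a - b| ≤ 1) (hcd : |c - d| ≤ 1)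
    (hr : r ∈ Ico (0 : ℝ) 1) (hs : s ∈ Ico (0 : ℝ) 1)
    (h : AffineMap.lineMap (a : ℝ) (b : ℝ) r = AffineMap.lineMap (c : ℝ) (d : ℝ) s) :
    (a = c ∧ r * |(a - b : ℤ)| = s * |(c - d : ℤ)|) ∨ (a ≠ b ∧ a = d ∧ b = c) := by
  obtain ⟨hr₀, hr₁⟩ := hr
  obtain ⟨hs₀, hs₁⟩ := hs
  obtain ⟨e, rfl⟩ : ∃ e, b = a + e := ⟨b - a, by ring⟩
  obtain ⟨e', rfl⟩ : ∃ e', d = c + e' := ⟨d - c, by ring⟩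
  obtain ⟨n, rfl⟩ : ∃ n, a = c + n := ⟨a - c, by ring⟩
  have hn : (n : ℝ) = s * e' - r * e := by
    simp only [AffineMap.lineMap_apply_ring'] at h
    push_cast at h
    linarith
  have he : e = -1 ∨ e = 0 ∨ e = 1 := by
    rw [sub_add_cancel_left, abs_neg, abs_le] at hab
    lia
  have he' : e' = -1 ∨ e' = 0 ∨ e' = 1 := by
    rw [sub_add_cancel_left, abs_neg, abs_le] at hcd
    lia
  have hlo : -2 < n := by
    suffices (-2 : ℝ) < n by exact_mod_cast this
    rcases he with rfl | rfl | rfl <;> rcases he' with rfl | rfl | rfl <;> push_cast at hn <;>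
      linarith
  have hhi : n < 2 := by
    suffices (n : ℝ) < 2 by exact_mod_cast this
    rcases he with rfl | rfl | rfl <;> rcases he' with rfl | rfl | rfl <;> push_cast at hn <;>
      linarith
  obtain rfl | rfl | rfl : n = 0 ∨ n = -1 ∨ n = 1 := by lia
  · left
    refine ⟨add_zero c, ?_⟩
    rw [Int.cast_zero, eq_comm, sub_eq_zero] at hn
    rw [sub_add_cancel_left, sub_add_cancel_left, abs_neg, abs_neg, Int.cast_abs, Int.cast_abs]
    calc r * |(e : ℝ)| = |r * e| := by rw [abs_mul, abs_of_nonneg hr₀]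
      _ = |s * e'| := by rw [hn]
      _ = s * |(e' : ℝ)| := by rw [abs_mul, abs_of_nonneg hs₀]
  all_goals
    right
    rcases he with rfl | rfl | rfl <;> rcases he' with rfl | rfl | rfl <;>
      first | (exfalso; push_cast at hn; linarith) | lia

theorem eq_or_swap_of_lineMap_latticePoint_eq {m : ℕ} (hm : m ≠ 0) {a b c d : ℤ × ℤ} {r s : ℝ}
    (hab : |a.1 - b.1| + |a.2 - b.2| = 1) (hcd : |c.1 - d.1| + |c.2 - d.2| = 1)
    (hr : r ∈ Ico (0 : ℝ) 1) (hs : s ∈ Ico (0 : ℝ) 1)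
    (h : AffineMap.lineMap (latticePoint m a) (latticePoint m b) r =
      AffineMap.lineMap (latticePoint m c) (latticePoint m d) s) :
    (a = c ∧ r = s) ∨ (a = d ∧ b = c) := by
  have hscale (x y : ℤ) (t : ℝ) : AffineMap.lineMap (x / m : ℝ) (y / m : ℝ) t =
      AffineMap.lineMap (x : ℝ) (y : ℝ) t / m := by
    simp only [AffineMap.lineMap_apply_ring']
    ring
  have hm' : (m : ℝ) ≠ 0 := Nat.cast_ne_zero.2 hm
  simp only [Prod.ext_iff, AffineMap.fst_lineMap, AffineMap.snd_lineMap, latticePoint, hscale,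
    div_left_inj' hm'] at h
  have hab₁ := abs_nonneg (a.1 - b.1)
  have hab₂ := abs_nonneg (a.2 - b.2)
  have hcd₁ := abs_nonneg (c.1 - d.1)
  have hcd₂ := abs_nonneg (c.2 - d.2)
  have h₁ := eq_or_swap_of_lineMap_eq (by lia) (by lia) hr hs h.1
  have h₂ := eq_or_swap_of_lineMap_eq (by lia) (by lia) hr hs h.2
  have hab' : ((|a.1 - b.1| : ℤ) : ℝ) + (|a.2 - b.2| : ℤ) = 1 := by exact_mod_cast hab
  have hcd' : ((|c.1 - d.1| : ℤ) : ℝ) + (|c.2 - d.2| : ℤ) = 1 := by exact_mod_cast hcd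
  have hflat {x y x' y' : ℤ} (hxy : |x - y| + |x' - y'| = 1) (hne : x' ≠ y') : x = y := by
    have := abs_nonneg (x - y)
    have := abs_pos.2 (sub_ne_zero.2 hne)
    exact sub_eq_zero.1 (abs_eq_zero.1 (by lia))
  rcases h₁ with ⟨hac₁, hrs₁⟩ | ⟨hne₁, hsw₁⟩ <;> rcases h₂ with ⟨hac₂, hrs₂⟩ | ⟨hne₂, hsw₂⟩
  · refine .inl ⟨Prod.ext hac₁ hac₂, ?_⟩
    calc r = r * |(a.1 - b.1 : ℤ)| + r * |(a.2 - b.2 : ℤ)| := by rw [← mul_add, hab', mul_one]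
      _ = s * |(c.1 - d.1 : ℤ)| + s * |(c.2 - d.2 : ℤ)| := by rw [hrs₁, hrs₂]
      _ = s := by rw [← mul_add, hcd', mul_one]
  · exact .inr ⟨Prod.ext (by rw [hac₁, hflat hcd (hsw₂.1 ▸ hsw₂.2 ▸ hne₂.symm)]) hsw₂.1,
      Prod.ext (by rw [← hac₁, hflat hab hne₂]) hsw₂.2⟩
  · rw [add_comm] at hab hcd
    exact .inr ⟨Prod.ext hsw₁.1 (by rw [hac₂, hflat hcd (hsw₁.1 ▸ hsw₁.2 ▸ hne₁.symm)]),
      Prod.ext hsw₁.2 (by rw [← hac₂, hflat hab hne₁])⟩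
  · exact .inr ⟨Prod.ext hsw₁.1 hsw₂.1, Prod.ext hsw₁.2 hsw₂.2⟩

section PeriodicWalk

variable {m : ℕ} {v : ℤ → ℤ × ℤ} {L k : ℤ}

theorem abs_fst_sub_le_of_walk (hv : ∀ i, |(v i).1 - (v (i + 1)).1| + |(v i).2 - (v (i + 1)).2| = 1)
    (i : ℤ) (n : ℕ) : |(v (i + n)).1 - (v i).1| ≤ n := by
  induction n with
  | zero => simp
  | succ n ih =>
    have hstep := hv (i + n)
    have hvert := abs_nonneg ((v (i + n)).2 - (v (i + n + 1)).2)
    have htri := abs_sub_le (v (i + n + 1)).1 (v (i + n)).1 (v i).1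
    rw [abs_sub_comm (v (i + n + 1)).1 (v (i + n)).1] at htri
    push_cast
    rw [← add_assoc]
    linarith

theorem three_le_period (hm : 3 ≤ m) (hk : k ≠ 0) (hL : 0 < L)
    (hv : ∀ i, |(v i).1 - (v (i + 1)).1| + |(v i).2 - (v (i + 1)).2| = 1)
    (hper : ∀ i, v (i + L) = v i + (k * m, 0)) : 3 ≤ L := by
  lift L to ℕ using hL.le
  have hle := abs_fst_sub_le_of_walk hv 0 L
  rw [hper, Prod.fst_add, add_sub_cancel_left, abs_mul, Nat.abs_cast] at hle
  have hk' : 1 ≤ |k| := Int.one_le_abs hk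
  calc (3 : ℤ) ≤ m := by exact_mod_cast hm
    _ ≤ |k| * m := le_mul_of_one_le_left (Int.natCast_nonneg m) hk'
    _ ≤ L := hle

theorem isEssentialCircle_of_periodic_walk (hm : 3 ≤ m) (hk : k ≠ 0) (hL : 0 < L)
    (hv : ∀ i, |(v i).1 - (v (i + 1)).1| + |(v i).2 - (v (i + 1)).2| = 1)
    (hper : ∀ i, v (i + L) = v i + (k * m, 0))
    (hinj : ∀ i j l : ℤ, v i = v j + (l * m, 0) → L ∣ i - j) :
    IsEssentialCircle (range (prj ∘ polyline (latticePoint m ∘ v))) := by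
  have hm₀ : m ≠ 0 := by lia
  have hL₀ : (L : ℝ) ≠ 0 := by exact_mod_cast hL.ne'
  have hshift (l : ℤ) : Tr l ∘ latticePoint m ∘ v = latticePoint m ∘ fun i => v i + (l * m, 0) :=
    funext fun i => (latticePoint_add hm₀ (v i) l).symm
  have hspeed : Function.Surjective fun t : ℝ => L * t := mul_left_surjective₀ hL₀
  rw [← hspeed.range_comp, Function.comp_assoc]
  refine isEssentialCircle_range ((continuous_polyline _).comp (continuous_const_mul _)) hk
    (fun t => ?_) fun s t hst => ?_
  · simp only [Function.comp_apply, mul_add, mul_one, polyline_add_intCast, ← polyline_Tr, hshift,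
      hper]
    rfl
  · obtain ⟨l, hl⟩ := prj_eq_prj_iff.1 hst
    rw [Function.comp_apply, Function.comp_apply, ← polyline_Tr, hshift] at hl
    set i := ⌊L * s⌋
    set j := ⌊L * t⌋
    have hedge := eq_or_swap_of_lineMap_latticePoint_eq hm₀ (hv i)
      (by simpa only [Prod.fst_add, Prod.snd_add, add_sub_add_right_eq_sub] using hv j)
      ⟨Int.fract_nonneg _, Int.fract_lt_one _⟩ ⟨Int.fract_nonneg _, Int.fract_lt_one _⟩ hl
    rcases hedge with ⟨hij, hfract⟩ | ⟨hij, hji⟩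
    · obtain ⟨q, hq⟩ := hinj _ _ _ hij
      refine coe_addCircle_eq_iff.2 ⟨q, mul_left_cancel₀ hL₀ ?_⟩
      calc L * s = i + Int.fract (L * s) := (Int.floor_add_fract _).symm
        _ = (j + Int.fract (L * t)) + (i - j : ℤ) := by rw [hfract]; push_cast; ring
        _ = L * (t + q) := by rw [Int.floor_add_fract, hq]; push_cast; ring
    · have htwo : L ∣ (i + 1 - j) - (i - (j + 1)) := dvd_sub (hinj _ _ _ hji) (hinj _ _ _ hij)
      have := Int.le_of_dvd two_pos (by convert htwo using 1; ring)
      have := three_le_period hm hk hL hv hper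
      lia

end PeriodicWalk

theorem dist_prj_le (z w : Plane) : dist (prj z) (prj w) ≤ dist z w := by
  refine max_le_max ?_ le_rfl
  rw [prj, prj, dist_eq_norm, dist_eq_norm, ← AddCircle.coe_sub]
  exact QuotientAddGroup.norm_mk_le_norm

theorem dist_latticePoint_le {m : ℕ} {a b : ℤ × ℤ} (h₁ : |a.1 - b.1| ≤ 1)
    (h₂ : |a.2 - b.2| ≤ 1) : dist (latticePoint m a) (latticePoint m b) ≤ 1 / m := by
  have hcoord {x y : ℤ} (hxy : |x - y| ≤ 1) : dist (x / m : ℝ) (y / m) ≤ 1 / m := by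
    rw [Real.dist_eq, ← sub_div, abs_div, Nat.abs_cast]
    gcongr
    exact_mod_cast hxy
  exact max_le (hcoord h₁) (hcoord h₂)

theorem exists_essentialCircle_near_outerBoundary {A : Set (ℤ × ℤ)} {m : ℕ} (hm : 3 ≤ m)
    (hA : ∀ a, a + ((m : ℤ), 0) ∈ A ↔ a ∈ A) {j₀ j₁ : ℤ} (hj₀ : ∀ i, (i, j₀) ∈ A)
    (hj₁ : ∀ i, (i, j₁) ∉ A) :
    ∃ c, IsEssentialCircle c ∧
      ∀ z ∈ c, ∃ a ∈ outerBoundary A, dist z (prj (latticePoint m a)) ≤ 1 / m := by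
  have hm₀ : m ≠ 0 := by lia
  set σ := gridShift (m : ℤ) (add_mem_outerBoundary_iff hA)
  have hσ (k : ℤ) (a : ℤ × ℤ) : (σ ^ k) a = a + (k * m, 0) := gridShift_zpow_apply _ k a
  obtain ⟨v, L, k, hL, hk, hadj, hper, hinj⟩ := exists_periodic_walk (σ := σ)
    (fun a k h => by simpa [hσ, hm₀] using h)
    (exists_reachable_outerBoundary_translate (by lia) hA hj₀ hj₁)
  refine ⟨_, isEssentialCircle_of_periodic_walk hm hk hL (fun i => (hadj i).2.2)
    (fun i => (hper i).trans (hσ k _)) fun i j l h => hinj i j l (h.trans (hσ l _).symm), ?_⟩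
  rintro _ ⟨t, rfl⟩
  refine ⟨v ⌊t⌋, (hadj _).1, (dist_prj_le _ _).trans ?_⟩
  have hstep := (hadj ⌊t⌋).2.2
  simp only [polyline, Function.comp_apply]
  rw [dist_lineMap_left, Real.norm_of_nonneg (Int.fract_nonneg t)]
  exact (mul_le_of_le_one_left dist_nonneg (Int.fract_lt_one t).le).trans
    (dist_latticePoint_le ((le_add_of_nonneg_right (abs_nonneg _)).trans_eq hstep)
      ((le_add_of_nonneg_left (abs_nonneg _)).trans_eq hstep))

end Polygons

section Ends

/-- The end of the annulus `ℝ/ℤ × ℝ` below all its compact sets, as a filter. -/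
def lowerEnd : Filter Ann := comap Prod.snd atBot

/-- The end of the annulus `ℝ/ℤ × ℝ` above all its compact sets, as a filter. -/
def upperEnd : Filter Ann := comap Prod.snd atTop

instance : NeBot lowerEnd := NeBot.comap_of_surj inferInstance Prod.snd_surjective

instance : NeBot upperEnd := NeBot.comap_of_surj inferInstance Prod.snd_surjective

theorem cocompact_annulus : cocompact Ann = lowerEnd ⊔ upperEnd := by
  rw [← coprod_cocompact, Filter.coprod, cocompact_eq_bot, comap_bot, bot_sup_eq,
    cocompact_eq_atBot_atTop, comap_sup]
  rfl

theorem uniformContinuous_of_tendsto_ends {u : Ann → ℝ} (hu : Continuous u) {a b : ℝ}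
    (hlower : Tendsto u lowerEnd (𝓝 a)) (hupper : Tendsto u upperEnd (𝓝 b)) :
    UniformContinuous u := by
  set w : Ann → ℝ := fun z => a + (b - a) * projIcc (0 : ℝ) 1 zero_le_one z.2 with hw
  have hw_unif : UniformContinuous w := by
    have hproj : UniformContinuous fun y : ℝ => (projIcc (0 : ℝ) 1 zero_le_one y : ℝ) :=
      uniformContinuous_subtype_val.comp (LipschitzWith.projIcc zero_le_one).uniformContinuous
    exact uniformContinuous_const.add ((hproj.comp uniformContinuous_snd).const_mul' _)
  have hw_lower : w =ᶠ[lowerEnd] fun _ => a := by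
    filter_upwards [preimage_mem_comap (Iic_mem_atBot 0)] with z hz
    simp [hw, projIcc_of_le_left _ (show z.2 ≤ 0 from hz)]
  have hw_upper : w =ᶠ[upperEnd] fun _ => b := by
    filter_upwards [preimage_mem_comap (Ici_mem_atTop 1)] with z hz
    simp [hw, projIcc_of_right_le _ (show 1 ≤ z.2 from hz)]
  have hdiff : Tendsto (fun z => u z - w z) (cocompact Ann) (𝓝 0) := by
    rw [cocompact_annulus]
    refine .sup ?_ ?_
    · simpa using hlower.sub (tendsto_const_nhds.congr' hw_lower.symm)
    · simpa using hupper.sub (tendsto_const_nhds.congr' hw_upper.symm)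
  have := ((hu.sub hw_unif.continuous).uniformContinuous_of_tendsto_cocompact hdiff).add hw_unif
  simpa using this

theorem exists_essentialCircle_subset_preimage_Ioo {u : Ann → ℝ} (hu : Continuous u)
    (hlower : Tendsto u lowerEnd (𝓝 0)) (hupper : Tendsto u upperEnd (𝓝 1)) :
    ∃ c, IsEssentialCircle c ∧ c ⊆ u ⁻¹' Ioo 0 1 := by
  obtain ⟨δ, hδ, hunif⟩ := Metric.uniformContinuous_iff.1
    (uniformContinuous_of_tendsto_ends hu hlower hupper) (1 / 4) (by norm_num)
  obtain ⟨m, hmδ, hm⟩ : ∃ m : ℕ, 1 / (m : ℝ) < δ ∧ 3 ≤ m :=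
    ((tendsto_one_div_atTop_nhds_zero_nat.eventually_lt_const hδ).and
      (eventually_ge_atTop 3)).exists
  have hm₀ : (0 : ℝ) < m := by exact_mod_cast (by lia : 0 < m)
  set A : Set (ℤ × ℤ) := {a | u (prj (latticePoint m a)) < 1 / 2} with hA_def
  have hA (a : ℤ × ℤ) : a + ((m : ℤ), 0) ∈ A ↔ a ∈ A := by
    have := latticePoint_add (by lia : m ≠ 0) a 1
    rw [one_mul] at this
    simp only [hA_def, mem_ofPred_eq, this, prj_Tr]
  obtain ⟨j₀, hj₀⟩ : ∃ j₀, ∀ i, (i, j₀) ∈ A := by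
    have := eventually_comap.1 (hlower.eventually_lt_const (by norm_num : (0 : ℝ) < 1 / 2))
    obtain ⟨j, hj⟩ := (((tendsto_intCast_atBot_iff.2 tendsto_id).atBot_div_const
      hm₀).eventually this).exists
    exact ⟨j, fun i => hj (prj (latticePoint m (i, j))) rfl⟩
  obtain ⟨j₁, hj₁⟩ : ∃ j₁, ∀ i, (i, j₁) ∉ A := by
    have := eventually_comap.1 (hupper.eventually_const_lt (by norm_num : (1 / 2 : ℝ) < 1))
    obtain ⟨j, hj⟩ := ((tendsto_intCast_atTop_atTop.atTop_div_const hm₀).eventually this).exists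
    exact ⟨j, fun i => (hj (prj (latticePoint m (i, j))) rfl).not_gt⟩
  obtain ⟨c, hc, hnear⟩ := exists_essentialCircle_near_outerBoundary hm hA hj₀ hj₁
  refine ⟨c, hc, fun z hz => ?_⟩
  obtain ⟨a, ⟨haA, b, hbA, hab⟩, hza⟩ := hnear z hz
  have hua : 1 / 2 ≤ u (prj (latticePoint m a)) := not_lt.1 haA
  have hub : u (prj (latticePoint m b)) < 1 / 2 := hbA
  have hzu := abs_lt.1 (hunif (hza.trans_lt hmδ))
  have habu := abs_lt.1 (hunif (((dist_prj_le _ _).trans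
    (dist_latticePoint_le hab.1 hab.2)).trans_lt hmδ))
  exact ⟨by linarith [hzu.1], by linarith [hzu.2, habu.2]⟩

end Ends

section Dynamics

theorem forall_lt_or_forall_gt_of_isPreconnected {X : Type*} [TopologicalSpace X] {S : Set X}
    (hS : IsPreconnected S) {φ : X → ℝ} (hφ : Continuous φ) {y : ℝ} (hy : ∀ z ∈ S, φ z ≠ y) :
    (∀ z ∈ S, φ z < y) ∨ ∀ z ∈ S, y < φ z :=
  hS.subset_or_subset (isOpen_lt hφ continuous_const) (isOpen_lt continuous_const hφ)
    (disjoint_left.2 fun z (h : φ z < y) => h.not_gt) fun z hz => (hy z hz).lt_or_gt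

theorem isPreconnected_preimage_snd {S : Set ℝ} (hS : IsPreconnected S) :
    IsPreconnected {z : Ann | z.2 ∈ S} := by
  have := (isPreconnected_univ (α := AddCircle (1 : ℝ))).prod hS
  rwa [univ_prod] at this

theorem isCompact_horizontal (y : ℝ) : IsCompact {z : Ann | z.2 = y} := by
  have := (isCompact_univ (X := AddCircle (1 : ℝ))).prod (isCompact_singleton (x := y))
  rwa [univ_prod] at this

section TrappingRegion

variable {X : Type*} [TopologicalSpace X]

theorem homeomorph_coe_pow (g : X ≃ₜ X) (n : ℕ) : ⇑(g ^ n) = g^[n] := by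
  induction n with
  | zero => rfl
  | succ n ih => rw [pow_succ, Function.iterate_succ, ← ih]; rfl

theorem homeomorph_symm_pow (g : X ≃ₜ X) (n : ℕ) : g.symm ^ n = (g ^ n).symm :=
  inv_pow g n

/-- If `g ^ n` contracts `K`, then `⋃ i < n, (g ^ i) '' {u ≤ (i + 1) / (n + 1)}` is a trapping
region of `g`, for `u` a Urysohn function from `(g ^ n) '' K` to the complement of `K`. -/
theorem exists_trappingRegion [NormalSpace X] (g : X ≃ₜ X) {K : Set X} (hK : IsClosed K) {n : ℕ}
    (hn : 0 < n) (hgK : (g ^ n) '' K ⊆ interior K) :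
    ∃ W, IsClosed W ∧ g '' W ⊆ interior W ∧ (g ^ n) '' K ⊆ W ∧
      W ⊆ ⋃ i ∈ Finset.range n, (g ^ i) '' K := by
  obtain ⟨u, hu₀, hu₁, -⟩ := exists_continuous_zero_one_of_isClosed
    ((g ^ n).isClosedMap K hK) isOpen_interior.isClosed_compl
    (disjoint_compl_right_iff_subset.2 hgK)
  have hu : Continuous fun z => (n + 1) * u z := by fun_prop
  set A : ℕ → Set X := fun i => {z | (n + 1) * u z ≤ i + 1}
  have hA_closed (i : ℕ) : IsClosed (A i) := isClosed_le hu continuous_const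
  have hA_int {i : ℕ} {z : X} (hz : (n + 1) * u z < i + 1) : z ∈ interior (A i) :=
    interior_maximal (fun w (hw : (n + 1) * u w < i + 1) => hw.le)
      (isOpen_lt hu continuous_const) hz
  have hA_step (i : ℕ) : A i ⊆ interior (A (i + 1)) := fun z (hz : (n + 1) * u z ≤ i + 1) =>
    hA_int (by push_cast; linarith)
  have hA_sub {i : ℕ} (hi : i < n) : A i ⊆ K := fun z (hz : (n + 1) * u z ≤ i + 1) => by
    by_contra hzK
    have hi' : (i : ℝ) < n := Nat.cast_lt.2 hi
    rw [hu₁ (notMem_subset interior_subset hzK), Pi.one_apply] at hz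
    linarith
  have hA_zero : (g ^ n) '' K ⊆ interior (A 0) := fun z hz => hA_int (by simp [hu₀ hz])
  set W := ⋃ i ∈ Finset.range n, (g ^ i) '' A i
  have hW {i : ℕ} (hi : i < n) : (g ^ i) '' interior (A i) ⊆ interior W :=
    interior_maximal ((image_mono interior_subset).trans
      (subset_iUnion₂_of_subset i (Finset.mem_range.2 hi) subset_rfl))
      ((g ^ i).isOpenMap _ isOpen_interior)
  have hKW : (g ^ n) '' K ⊆ interior W := fun z hz => hW hn ⟨z, hA_zero hz, rfl⟩
  refine ⟨W, isClosed_biUnion_finset fun i _ => (g ^ i).isClosedMap _ (hA_closed i), ?_,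
    hKW.trans interior_subset, iUnion₂_mono fun i hi => image_mono (hA_sub (Finset.mem_range.1 hi))⟩
  rw [image_iUnion₂]
  refine iUnion₂_subset fun i hi => ?_
  have hsucc : g '' ((g ^ i) '' A i) = (g ^ (i + 1)) '' A i := by rw [pow_succ', image_image]; rfl
  rw [hsucc]
  obtain hi' | rfl : i + 1 < n ∨ i + 1 = n := (Nat.succ_le_of_lt (Finset.mem_range.1 hi)).lt_or_eq
  · exact (image_mono (hA_step i)).trans (hW hi')
  · exact (image_mono (hA_sub i.lt_succ_self)).trans hKW

end TrappingRegion

theorem tendsto_ends_of_intersectionProperty {g : Ann ≃ₜ Ann} (hg : IntersectionProperty g) :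
    Tendsto g lowerEnd lowerEnd ∧ Tendsto g upperEnd upperEnd := by
  have hside {y M : ℝ} (havoid : ∀ z : Ann, z.2 = y → (g z).2 ≠ M) :
      (y < M → ∀ z : Ann, z.2 = y → (g z).2 < M) ∧
        (M < y → ∀ z : Ann, z.2 = y → M < (g z).2) := by
    obtain ⟨_, hgw, w, hw, rfl⟩ := hg _ (isEssentialCircle_horizontal y)
    rcases forall_lt_or_forall_gt_of_isPreconnected (isPreconnected_preimage_snd
      isPreconnected_singleton) (continuous_snd.comp g.continuous) havoid with hlt | hgt
    · exact ⟨fun _ => hlt, fun hMy => absurd (hgw ▸ hlt w hw) hMy.not_gt⟩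
    · exact ⟨fun hyM => absurd (hgw ▸ hgt w hw) hyM.not_gt, fun _ => hgt⟩
  have havoid (M : ℝ) : ∀ᶠ z in lowerEnd ⊔ upperEnd, (g z).2 ≠ M := by
    rw [← cocompact_annulus]
    exact (show Tendsto g (cocompact Ann) (cocompact Ann) from g.map_cocompact.le).eventually
      (isCompact_horizontal M).compl_mem_cocompact
  refine ⟨tendsto_comap_iff.2 (tendsto_atBot.2 fun M => ?_),
    tendsto_comap_iff.2 (tendsto_atTop.2 fun M => ?_)⟩
  · refine eventually_comap.2 ?_
    filter_upwards [eventually_comap.1 (eventually_sup.1 (havoid M)).1, eventually_lt_atBot M]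
      with y hy hyM z hz using ((hside hy).1 hyM z hz).le
  · refine eventually_comap.2 ?_
    filter_upwards [eventually_comap.1 (eventually_sup.1 (havoid M)).2, eventually_gt_atTop M]
      with y hy hyM z hz using ((hside hy).2 hyM z hz).le

theorem IntersectionProperty.symm {g : Ann ≃ₜ Ann} (hg : IntersectionProperty g) :
    IntersectionProperty g.symm := by
  intro c hc
  obtain ⟨z, hz, w, hw, rfl⟩ := hg c hc
  exact ⟨w, hw, g w, hz, g.symm_apply_apply w⟩

theorem not_image_subset_interior_of_intersectionProperty {g : Ann ≃ₜ Ann}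
    (hg : IntersectionProperty g) {W : Set Ann} (hW : IsClosed W) (hlower : W ∈ lowerEnd)
    (hupper : Wᶜ ∈ upperEnd) : ¬ g '' W ⊆ interior W := by
  intro hgW
  obtain ⟨u, hu₀, hu₁, -⟩ := exists_continuous_zero_one_of_isClosed (g.isClosedMap W hW)
    isOpen_interior.isClosed_compl (disjoint_compl_right_iff_subset.2 hgW)
  have hgW_lower : g '' W ∈ lowerEnd := by
    rw [g.image_eq_preimage_symm]
    exact (tendsto_ends_of_intersectionProperty hg.symm).1 hlower
  obtain ⟨c, hc, hcu⟩ := exists_essentialCircle_subset_preimage_Ioo u.continuous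
    (tendsto_const_nhds.congr' (hu₀.eventuallyEq_of_mem hgW_lower).symm)
    (tendsto_const_nhds.congr' (hu₁.eventuallyEq_of_mem
      (mem_of_superset hupper (compl_subset_compl.2 interior_subset))).symm)
  obtain ⟨_, hgz, z, hz, rfl⟩ := hg c hc
  have hzW : z ∈ interior W := by
    by_contra hzW
    exact (hcu hz).2.ne (hu₁ hzW)
  exact (hcu hgz).1.ne' (hu₀ (mem_image_of_mem g (interior_subset hzW)))

theorem tendsto_pow_ends {g : Ann ≃ₜ Ann} (hg : IntersectionProperty g) (n : ℕ) :
    Tendsto (g ^ n) lowerEnd lowerEnd ∧ Tendsto (g ^ n) upperEnd upperEnd := by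
  obtain ⟨hlower, hupper⟩ := tendsto_ends_of_intersectionProperty hg
  rw [homeomorph_coe_pow]
  exact ⟨hlower.iterate n, hupper.iterate n⟩

theorem exists_snd_nonneg_of_intersectionProperty {g : Ann ≃ₜ Ann}
    (hg : IntersectionProperty g) {n : ℕ} (hn : 0 < n) :
    ∃ z : Ann, z.2 ≤ 0 ∧ 0 ≤ ((g ^ n) z).2 := by
  by_contra! hneg
  set K : Set Ann := {z | z.2 ≤ 0}
  have hK_lower : K ∈ lowerEnd := preimage_mem_comap (Iic_mem_atBot 0)
  have hK_upper : Kᶜ ∈ upperEnd := mem_of_superset (preimage_mem_comap (Ioi_mem_atTop 0))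
    fun z (hz : 0 < z.2) => hz.not_ge
  have hK_int : {z : Ann | z.2 < 0} ⊆ interior K :=
    interior_maximal (fun z (hz : z.2 < 0) => hz.le) (isOpen_lt continuous_snd continuous_const)
  have hsymm (i : ℕ) (S : Set Ann) : (g ^ i) '' S = (g.symm ^ i) ⁻¹' S := by
    rw [(g ^ i).image_eq_preimage_symm, homeomorph_symm_pow]
  have hends := tendsto_pow_ends hg.symm
  obtain ⟨W, hW, hgW, hKW, hWK⟩ := exists_trappingRegion g
    (isClosed_le continuous_snd continuous_const) hn
    (image_subset_iff.2 fun z hz => hK_int (hneg z hz))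
  refine not_image_subset_interior_of_intersectionProperty hg hW
    (mem_of_superset (hsymm n K ▸ (hends n).1 hK_lower) hKW)
    (mem_of_superset ?_ (compl_subset_compl.2 hWK)) hgW
  rw [compl_iUnion₂, biInter_finset_mem]
  intro i _
  rw [← image_compl_eq (g ^ i).bijective, hsymm]
  exact (hends i).2 hK_upper

theorem exists_pow_mem_horizontal_of_intersectionProperty {g : Ann ≃ₜ Ann}
    (hg : IntersectionProperty g) {n : ℕ} (hn : 0 < n) :
    ∃ z : Ann, z.2 = 0 ∧ ((g ^ n) z).2 = 0 := by
  by_contra! havoid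
  have hcont (h : Ann ≃ₜ Ann) : Continuous fun z => (h z).2 := continuous_snd.comp h.continuous
  obtain ⟨hlower, hupper⟩ := tendsto_pow_ends hg.symm n
  rw [homeomorph_symm_pow] at hlower hupper
  have hbelow : ∀ᶠ z in lowerEnd, z.2 < 0 := preimage_mem_comap (Iio_mem_atBot 0)
  have habove : ∀ᶠ z in upperEnd, 0 < z.2 := preimage_mem_comap (Ioi_mem_atTop 0)
  rcases forall_lt_or_forall_gt_of_isPreconnected (isPreconnected_preimage_snd
    isPreconnected_singleton) (hcont (g ^ n)) havoid with hlt | hgt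
  · have hne (z : Ann) (hz : 0 ≤ z.2) : ((g ^ n).symm z).2 ≠ 0 := fun h =>
      hz.not_gt ((g ^ n).apply_symm_apply z ▸ hlt _ h)
    rcases forall_lt_or_forall_gt_of_isPreconnected (isPreconnected_preimage_snd
      isPreconnected_Ici) (hcont (g ^ n).symm) hne with hneg | hpos
    · obtain ⟨z, hz, hz'⟩ := (habove.and (hupper.eventually habove)).exists
      exact (hneg z hz.le).not_gt hz'
    · obtain ⟨z, hz, hgz⟩ := exists_snd_nonneg_of_intersectionProperty hg hn
      exact hz.not_gt ((g ^ n).symm_apply_apply z ▸ hpos _ hgz)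
  · have hne (z : Ann) (hz : z.2 ≤ 0) : ((g ^ n).symm z).2 ≠ 0 := fun h =>
      hz.not_gt ((g ^ n).apply_symm_apply z ▸ hgt _ h)
    rcases forall_lt_or_forall_gt_of_isPreconnected (isPreconnected_preimage_snd
      isPreconnected_Iic) (hcont (g ^ n).symm) hne with hneg | hpos
    · obtain ⟨z, hz, hgz⟩ := exists_snd_nonneg_of_intersectionProperty hg.symm hn
      rw [homeomorph_symm_pow] at hgz
      exact (hneg z hz).not_ge hgz
    · obtain ⟨z, hz, hz'⟩ := (hbelow.and (hlower.eventually hbelow)).exists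
      exact (hpos z hz.le).not_gt hz'

theorem rotWeak_nonempty_of_intersectionProperty {f : Ann ≃ₜ Ann} {F : Plane ≃ₜ Plane}
    (hf : IntersectionProperty f) (hF : IsLift f F) : (RotWeak F).Nonempty := by
  choose zs hzs hfzs using fun k : ℕ =>
    exists_pow_mem_horizontal_of_intersectionProperty hf k.succ_pos
  choose ws hws using fun k => surjective_prj (zs k)
  have hiter (n : ℕ) (w : Plane) : prj (F^[n] w) = (f ^ n) (prj w) := by
    rw [homeomorph_coe_pow]
    exact Function.Semiconj.iterate_right (f := prj) hF n w
  obtain ⟨r, φ, hφ, hr⟩ := CompactSpace.tendsto_subseq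
    fun k => ((((F^[k + 1] (ws k)).1 - (ws k).1) / ((k + 1 : ℕ) : ℝ) : ℝ) : EReal)
  refine ⟨r, mem_iUnion₂.2 ⟨_, isCompact_horizontal 0, fun k => ws (φ k), fun k => φ k + 1,
    fun k => ?_, fun k => ?_, fun k => Nat.succ_pos _,
    tendsto_atTop_mono (fun k => Nat.le_succ _) hφ.tendsto_atTop, hr⟩⟩
  · rw [hws]
    exact hzs (φ k)
  · rw [hiter, hws]
    exact hfzs (φ k)

end Dynamics

section RotationSets

theorem mem_rotWeak_iff {F : Plane → Plane} {r : EReal} :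
    r ∈ RotWeak F ↔ ∃ K, IsCompact K ∧ r ∈ RotWeakK F K := by
  simp [RotWeak]

theorem tendsto_coe_mul_add {ι : Type*} {l : Filter ι} {a c d : ι → ℝ} {r : EReal} {c₀ d₀ : ℝ}
    (ha : Tendsto (fun i => (a i : EReal)) l (𝓝 r)) (hc : Tendsto c l (𝓝 c₀)) (hc₀ : c₀ ≠ 0)
    (hd : Tendsto d l (𝓝 d₀)) :
    Tendsto (fun i => ((c i * a i + d i : ℝ) : EReal)) l (𝓝 (c₀ * r + d₀)) := by
  have hmul : Tendsto (fun i => (c i : EReal) * a i) l (𝓝 (c₀ * r)) :=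
    EReal.Tendsto.mul (EReal.tendsto_coe.2 hc) ha (by simp [hc₀]) (by simp [hc₀]) (by simp)
      (by simp)
  refine ((EReal.continuousAt_add (p := (c₀ * r, (d₀ : EReal))) (by simp) (by simp)).tendsto.comp
    (hmul.prodMk_nhds (EReal.tendsto_coe.2 hd))).congr fun i => ?_
  simp

theorem tendsto_natCast_div_of_mul_eq_add {ι : Type*} {l : Filter ι} {N : ℕ} {m n t : ι → ℕ}
    (hm : Tendsto (fun i => (m i : ℝ)) l atTop) (hm₀ : ∀ i, (m i : ℝ) ≠ 0) (ht : ∀ i, t i ≤ N)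
    (hmn : ∀ i, N * m i = t i + n i) :
    Tendsto (fun i => (n i : ℝ) / m i) l (𝓝 N) := by
  have hdelay : Tendsto (fun i => (t i : ℝ) / m i) l (𝓝 0) :=
    tendsto_bdd_div_atTop_nhds_zero (.of_forall fun i => Nat.cast_nonneg _)
      (.of_forall fun i => Nat.cast_le.2 (ht i)) hm
  refine (sub_zero (N : ℝ) ▸ tendsto_const_nhds.sub hdelay).congr fun i => ?_
  have : (N : ℝ) * m i = t i + n i := by exact_mod_cast hmn i
  rw [sub_eq_iff_eq_add, ← add_div, eq_div_iff (hm₀ i), this, add_comm]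

theorem image_rotWeak_subset_rotWeak_Tr_comp {F : Plane → Plane} {p : ℤ}
    (hF : Function.Commute F (Tr p)) :
    (fun r : EReal => r + ((p : ℝ) : EReal)) '' RotWeak F ⊆ RotWeak (Tr p ∘ F) := by
  rintro _ ⟨r, hr, rfl⟩
  obtain ⟨K, hK, zs, ns, hz, hFz, hpos, hns, hlim⟩ := mem_rotWeak_iff.1 hr
  have hiter (k : ℕ) : (Tr p ∘ F)^[ns k] (zs k) = Tr (ns k * p) (F^[ns k] (zs k)) := by
    rw [hF.symm.comp_iterate, iterate_Tr, Function.comp_apply]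
  refine mem_rotWeak_iff.2
    ⟨K, hK, zs, ns, hz, fun k => by rw [hiter, prj_Tr]; exact hFz k, hpos, hns, ?_⟩
  have h := tendsto_coe_mul_add hlim (tendsto_const_nhds (x := 1)) one_ne_zero
    (tendsto_const_nhds (x := (p : ℝ)))
  rw [EReal.coe_one, one_mul] at h
  refine h.congr fun k => congrArg _ ?_
  have : (ns k : ℝ) ≠ 0 := by exact_mod_cast (hpos k).ne'
  rw [hiter]
  simp only [Tr]
  push_cast
  field_simp
  ring

theorem rotWeak_Tr_comp {F : Plane → Plane} (hF : Function.Commute F (Tr 1)) (p : ℤ) :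
    RotWeak (Tr p ∘ F) = (fun r : EReal => r + ((p : ℝ) : EReal)) '' RotWeak F := by
  refine Subset.antisymm (fun r hr => ?_)
    (image_rotWeak_subset_rotWeak_Tr_comp (commute_Tr hF p))
  have hT : Function.Commute (Tr p) (Tr (-p)) := commute_Tr (commute_Tr (.refl _) p).symm (-p)
  have hcancel : Tr (-p) ∘ Tr p ∘ F = F := funext fun z => leftInverse_Tr p (F z)
  refine ⟨r + ((-p : ℤ) : ℝ), hcancel ▸ image_rotWeak_subset_rotWeak_Tr_comp
    (hT.comp_left (commute_Tr hF (-p))) ⟨r, hr, rfl⟩, ?_⟩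
  push_cast
  exact EReal.sub_add_cancel

theorem exists_isCompact_bound_iterate {F : Plane → Plane} (hF : Continuous F)
    (hT : Function.Commute F (Tr 1)) {K : Set Ann} (hK : IsCompact K) (N : ℕ) :
    ∃ K' : Set Ann, IsCompact K' ∧ ∃ B : ℝ, ∀ z, prj z ∈ K → ∀ t ≤ N,
      prj (F^[t] z) ∈ K' ∧ |(F^[t] z).1 - z.1| ≤ B := by
  set D : Set (ℕ × Plane) := Iic N ×ˢ Icc 0 1 ×ˢ (Prod.snd '' K)
  have hD : IsCompact D :=
    (finite_Iic N).isCompact.prod (isCompact_Icc.prod (hK.image continuous_snd))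
  have hiter : Continuous fun x : ℕ × Plane => F^[x.1] x.2 :=
    continuous_prod_of_discrete_left.2 hF.iterate
  obtain ⟨B, hB⟩ := (hD.image (f := fun x => (F^[x.1] x.2).1 - x.2.1) (by fun_prop)).isBounded
    |>.exists_norm_le
  refine ⟨_, hD.image (continuous_prj.comp hiter), B, fun z hz t ht => ?_⟩
  have hzD : (t, Tr (-⌊z.1⌋) z) ∈ D := by
    refine ⟨ht, ⟨?_, ?_⟩, mem_image_of_mem Prod.snd hz⟩ <;>
      simp [Tr, ← sub_eq_add_neg, Int.fract_nonneg, (Int.fract_lt_one z.1).le]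
  have hcomm : F^[t] (Tr (-⌊z.1⌋) z) = Tr (-⌊z.1⌋) (F^[t] z) :=
    (commute_Tr hT _).iterate_left t z
  constructor
  · refine ⟨_, hzD, ?_⟩
    simp only [Function.comp_apply, hcomm, prj_Tr]
  · have := hB _ (mem_image_of_mem _ hzD)
    rw [hcomm] at this
    simpa only [Tr, add_sub_add_right_eq_sub, Real.norm_eq_abs] using this

section Iterate

variable {F : Plane → Plane} {N : ℕ}

theorem rotWeak_iterate_subset (hN : 0 < N) :
    RotWeak F^[N] ⊆ (fun r : EReal => ((N : ℝ) : EReal) * r) '' RotWeak F := by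
  intro r hr
  obtain ⟨K, hK, zs, ns, hz, hFz, hpos, hns, hlim⟩ := mem_rotWeak_iff.1 hr
  have hNR : (N : ℝ) ≠ 0 := by exact_mod_cast hN.ne'
  have hlim' := tendsto_coe_mul_add hlim (tendsto_const_nhds (x := (N : ℝ)⁻¹)) (inv_ne_zero hNR)
    (tendsto_const_nhds (x := 0))
  refine ⟨((N : ℝ)⁻¹ : ℝ) * r, mem_rotWeak_iff.2 ⟨K, hK, zs, fun k => N * ns k, hz,
    fun k => by rw [Function.iterate_mul]; exact hFz k, fun k => Nat.mul_pos hN (hpos k),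
    tendsto_atTop_mono (fun k => Nat.le_mul_of_pos_left _ hN) hns, ?_⟩, ?_⟩
  · rw [EReal.coe_zero, add_zero] at hlim'
    refine hlim'.congr fun k => congrArg _ ?_
    have : (ns k : ℝ) ≠ 0 := by exact_mod_cast (hpos k).ne'
    rw [Function.iterate_mul]
    push_cast
    field_simp
    ring
  · beta_reduce
    rw [← mul_assoc, ← EReal.coe_mul, mul_inv_cancel₀ hNR, EReal.coe_one, one_mul]

/-- The return times are rounded up to multiples of `N`, which moves the endpoints of the orbit
segments a bounded distance. -/
theorem image_rotWeak_subset_rotWeak_iterate (hF : Continuous F) (hT : Function.Commute F (Tr 1))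
    (hN : 0 < N) :
    (fun r : EReal => ((N : ℝ) : EReal) * r) '' RotWeak F ⊆ RotWeak F^[N] := by
  rintro _ ⟨r, hr, rfl⟩
  obtain ⟨K, hK, zs, ns, hz, hFz, hpos, hns, hlim⟩ := mem_rotWeak_iff.1 hr
  obtain ⟨K', hK', B, hB⟩ := exists_isCompact_bound_iterate hF hT hK N
  set ms : ℕ → ℕ := fun k => ns k / N + 1
  set ts : ℕ → ℕ := fun k => N - ns k % N
  have hts (k : ℕ) : ts k ≤ N := Nat.sub_le _ _
  have hNm (k : ℕ) : N * ms k = ts k + ns k := by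
    have := Nat.div_add_mod (ns k) N
    have := Nat.mod_lt (ns k) hN
    simp only [ms, ts, mul_add, mul_one]
    lia
  have hmpos (k : ℕ) : (ms k : ℝ) ≠ 0 := by exact_mod_cast (ns k / N).succ_ne_zero
  have hms : Tendsto ms atTop atTop := tendsto_atTop_mono (fun k => Nat.le_succ _)
    ((Nat.tendsto_div_const_atTop hN.ne').comp hns)
  have hmsR : Tendsto (fun k => (ms k : ℝ)) atTop atTop := tendsto_natCast_atTop_atTop.comp hms
  have hiter (k : ℕ) : (F^[N])^[ms k] (zs k) = F^[ts k] (F^[ns k] (zs k)) := by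
    rw [← Function.iterate_mul, hNm, Function.iterate_add_apply]
  set es : ℕ → ℝ := fun k => (F^[ts k] (F^[ns k] (zs k))).1 - (F^[ns k] (zs k)).1
  have herror : Tendsto (fun k => es k / ms k) atTop (𝓝 0) :=
    tendsto_bdd_div_atTop_nhds_zero
      (.of_forall fun k => (abs_le.1 (hB _ (hFz k) _ (hts k)).2).1)
      (.of_forall fun k => (abs_le.1 (hB _ (hFz k) _ (hts k)).2).2) hmsR
  refine mem_rotWeak_iff.2 ⟨K ∪ K', hK.union hK', zs, ms, fun k => .inl (hz k),
    fun k => .inr ?_, fun k => Nat.succ_pos _, hms, ?_⟩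
  · rw [hiter]
    exact (hB _ (hFz k) _ (hts k)).1
  · have h := tendsto_coe_mul_add hlim (tendsto_natCast_div_of_mul_eq_add hmsR hmpos hts hNm)
      (Nat.cast_ne_zero.2 hN.ne') herror
    rw [EReal.coe_zero, add_zero] at h
    refine h.congr fun k => congrArg _ ?_
    have := hmpos k
    have : (ns k : ℝ) ≠ 0 := by exact_mod_cast (hpos k).ne'
    rw [hiter]
    simp only [es]
    field_simp
    ring

theorem rotWeak_iterate (hF : Continuous F) (hT : Function.Commute F (Tr 1)) (hN : 0 < N) :
    RotWeak F^[N] = (fun r : EReal => ((N : ℝ) : EReal) * r) '' RotWeak F :=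
  (rotWeak_iterate_subset hN).antisymm (image_rotWeak_subset_rotWeak_iterate hF hT hN)

end Iterate

theorem rotWeak_id : RotWeak id = {0} := by
  have hzero (z : Plane) (n : ℕ) : (((id^[n] z).1 - z.1) / (n : ℝ) : ℝ) = 0 := by simp
  refine Subset.antisymm (fun r hr => ?_) (singleton_subset_iff.2 ?_)
  · obtain ⟨K, -, zs, ns, -, -, -, -, hlim⟩ := mem_rotWeak_iff.1 hr
    simp only [hzero] at hlim
    exact tendsto_nhds_unique hlim tendsto_const_nhds
  · refine mem_rotWeak_iff.2 ⟨{prj 0}, isCompact_singleton, fun _ => 0, fun k => k + 1,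
      fun _ => rfl, fun _ => by simp, fun k => k.succ_pos, tendsto_add_atTop_nat 1, ?_⟩
    simp only [hzero]
    exact tendsto_const_nhds

theorem neg_mem_rotWeak_symm {F : Plane ≃ₜ Plane} {r : EReal} (hr : r ∈ RotWeak F) :
    -r ∈ RotWeak F.symm := by
  obtain ⟨K, hK, zs, ns, hz, hFz, hpos, hns, hlim⟩ := mem_rotWeak_iff.1 hr
  have hinv (k : ℕ) : F.symm^[ns k] (F^[ns k] (zs k)) = zs k :=
    Function.LeftInverse.iterate F.symm_apply_apply _ _
  refine mem_rotWeak_iff.2 ⟨K, hK, fun k => F^[ns k] (zs k), ns, hFz,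
    fun k => (hinv k).symm ▸ hz k, hpos, hns, ?_⟩
  refine ((continuous_neg.tendsto r).comp hlim).congr fun k => ?_
  rw [Function.comp_apply, hinv, ← EReal.coe_neg, ← neg_div, neg_sub]

theorem rotWeak_symm (F : Plane ≃ₜ Plane) : RotWeak F.symm = Neg.neg '' RotWeak F := by
  refine Subset.antisymm (fun r hr => ⟨-r, ?_, neg_neg r⟩) (image_subset_iff.2 fun r hr => ?_)
  · exact neg_mem_rotWeak_symm (F := F.symm) hr
  · exact neg_mem_rotWeak_symm hr

section IntegerPowers

variable (F : Plane ≃ₜ Plane) (hT : Function.Commute F (Tr 1))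
include hT

theorem commute_symm_Tr : Function.Commute F.symm (Tr 1) :=
  hT.inverse_left F.symm_apply_apply F.apply_symm_apply

theorem commute_hpow_Tr (q : ℤ) : Function.Commute (hpow F q) (Tr 1) := by
  cases q with
  | ofNat n => exact hT.iterate_left n
  | negSucc n => exact (commute_symm_Tr F hT).iterate_left (n + 1)

theorem rotWeak_hpow (q : ℤ) (hne : q = 0 → (RotWeak F).Nonempty) :
    RotWeak (hpow F q) = (fun r : EReal => ((q : ℝ) : EReal) * r) '' RotWeak F := by
  rcases q with (_ | n) | n
  · have hzero : (fun r : EReal => ((Int.ofNat 0 : ℝ) : EReal) * r) = fun _ => 0 := by simp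
    rw [hzero, (hne rfl).image_const]
    exact rotWeak_id
  · exact rotWeak_iterate F.continuous hT n.succ_pos
  · refine (rotWeak_iterate F.symm.continuous (commute_symm_Tr F hT) n.succ_pos).trans ?_
    rw [rotWeak_symm, image_image]
    refine image_congr fun r _ => ?_
    rw [Int.cast_negSucc, EReal.coe_neg, EReal.neg_mul, mul_neg]

end IntegerPowers

end RotationSets

theorem rotWeak_pow_comp_translation_general (F : Plane ≃ₜ Plane) (hT : Function.Commute F (Tr 1))
    (p q : ℤ) (hne : q = 0 → (RotWeak F).Nonempty) :
    RotWeak (fun z => hpow F q (Tr p z)) =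
      (fun r : EReal => ((q : ℝ) : EReal) * r + ((p : ℝ) : EReal)) '' RotWeak F := by
  have hcomm := commute_hpow_Tr F hT q
  have hcomp : (fun z => hpow F q (Tr p z)) = Tr p ∘ hpow F q := funext (commute_Tr hcomm p)
  rw [hcomp, rotWeak_Tr_comp hcomm, rotWeak_hpow F hT q hne, image_image]

/-- Proposition 5.1 (4): for all integers `p, q`,
`Rot_weak(F^q ∘ T^p) = q·Rot_weak(F) + p` (with the obvious conventions on [-∞,+∞]). -/
theorem rotWeak_pow_comp_translation
    (f : Ann ≃ₜ Ann) (F : Plane ≃ₜ Plane)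
    (hiso : IsotopicToId f) (hint : IntersectionProperty f) (hlift : IsLift f F)
    (p q : ℤ) :
    RotWeak (fun z => hpow F q (Tr p z)) =
      (fun r : EReal => (((q : ℝ)) : EReal) * r + (((p : ℝ)) : EReal)) '' RotWeak ⇑F :=
  rotWeak_pow_comp_translation_general F (hlift.commute_Tr hiso.homotopic) p q
    fun _ => rotWeak_nonempty_of_intersectionProperty hint hlift
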